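/- Let K be a finite token alphabet, V = K ⊕ {m} with a distinguished mask symbol m, L ≥ 1, T ≥ 1, and x ∈ K^L. Let a_0 ≥ a_1 ≥ … ≥ a_T = 0 be a noise schedule with a_0 ≤ 1 and a_i < 1 for i ≥ 1, and set β_i := (a_{i−1} − a_i)/(1 − a_i) ∈ [0,1] for i = 1, …, T. Let q be the joint law on (V^L)^{T+1} of the backward chain (Z_T, …, Z_0) with Z_T the constant all-mask sequence and, given Z_i, the coordinates of Z_{i−1} independent with: Z_{i−1}^l = Z_i^l if Z_i^l ≠ m, and otherwise Z_{i−1}^l = x^l with probability β_i and Z_{i−1}^l = m with probability 1 − β_i. Let x_θ, x_φ : V^L → (probability vectors on K)^L be probability tables with x_θ(z)^l(x^l) > 0 and x_φ(z)^l(x^l) > 0 for all z, l; let w : V^L → ℝ with 0 < w(z) ≤ 1; let p_dec : V^L → ℝ be nonnegative with p_dec(z_0) > 0 whenever q assigns positive probability to a path ending at z_0 (the shared decoder p_φ(x|z_0) = p_θ(x|z_0)); and define the tilted reverse mass p_φ(x | y) as the sum over paths of the terminal all-mask point mass times ∏_{i=1}^{T} Q_{φ,i}(z_{i−1} | z_i)·w(z_i)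 times p_dec(z_0), where Q_{φ,i} fixes revealed coordinates and at masked coordinates l places mass 1−β_i on m and β_i·x_φ(z_i)^l(k) on k ∈ K. Define the pretrained negative evidence lower bound L_NELBO := E_q[−log p_dec(Z_0)] + Σ_{i=1}^{T} E_q[ β_i · Σ_{l=1}^{L} (−log x_θ(Z_i)^l(x^l)) · 1{Z_i^l = m} ]. Then −log p_φ(x | y) ≤ L_NELBO + Σ_{i=1}^{T} E_q[ β_i · Σ_{l=1}^{L} log( x_θ(Z_i)^l(x^l) / x_φ(Z_i)^l(x^l) ) · 1{Z_i^l = m} ] − Σ_{i=1}^{T} E_q[ log w(Z_i) ]. -/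

import Mathlib

/-!
On paths of positive probability under the backward chain `q`, every step moves a masked coordinate
`l` either to `m` or to `x l`. Hence the tilted path mass dominates `q` times a product of decoder,
tilt and reveal factors, where a coordinate that gets revealed contributes the probability `xφ`
gives to `x l`. Jensen's inequality for `log` bounds the log-mass from below by the `q`-expectation
of the logarithm of this product. Conditioned on the current state, a masked coordinate is revealed
with probability `β`, so the expected logarithm of the reveal factors is a `β`-weighted sum over
masked coordinates. The pretrained table enters by adding and subtracting `log xθ`.
-/

section Jensen

variable {Ω : Type*} [Fintype Ω] {q r : Ω → ℝ}

theorem sum_mul_pos_of_sum_eq_one (hq : ∀ ω, 0 ≤ q ω) (hq_sum : ∑ ω, q ω = 1)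
    (hr : ∀ ω, 0 < q ω → 0 < r ω) : 0 < ∑ ω, q ω * r ω := by
  have hqr (ω : Ω) : 0 ≤ q ω * r ω := by
    rcases (hq ω).eq_or_lt with h | h
    · simp [← h]
    · exact (mul_pos h (hr ω h)).le
  obtain ⟨ω, -, hω⟩ : ∃ ω ∈ Finset.univ, 0 < q ω :=
    Finset.exists_lt_of_sum_lt (by simp [hq_sum])
  exact Finset.sum_pos' (fun ω _ => hqr ω) ⟨ω, Finset.mem_univ ω, mul_pos hω (hr ω hω)⟩

theorem sum_mul_log_le_log_sum_mul (hq : ∀ ω, 0 ≤ q ω) (hq_sum : ∑ ω, q ω = 1)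
    (hr : ∀ ω, 0 < q ω → 0 < r ω) :
    ∑ ω, q ω * Real.log (r ω) ≤ Real.log (∑ ω, q ω * r ω) := by
  classical
  have sum_support (f : Ω → ℝ) : ∑ ω with 0 < q ω, q ω * f ω = ∑ ω, q ω * f ω :=
    Finset.sum_filter_of_ne fun ω _ h => (hq ω).lt_of_ne' (left_ne_zero_of_mul h)
  have support_sum : ∑ ω with 0 < q ω, q ω = 1 := by simpa [hq_sum] using sum_support 1
  rw [← sum_support, ← sum_support]
  exact strictConcaveOn_log_Ioi.concaveOn.le_map_sum (fun ω _ => hq ω) support_sum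
    fun ω hω => hr ω (Finset.mem_filter.1 hω).2

theorem neg_log_sum_le_of_mul_le {P : Ω → ℝ} (hq : ∀ ω, 0 ≤ q ω) (hq_sum : ∑ ω, q ω = 1)
    (hr : ∀ ω, 0 < q ω → 0 < r ω) (hP : ∀ ω, q ω * r ω ≤ P ω) :
    -Real.log (∑ ω, P ω) ≤ -∑ ω, q ω * Real.log (r ω) :=
  neg_le_neg <| (sum_mul_log_le_log_sum_mul hq hq_sum hr).trans <|
    Real.log_le_log (sum_mul_pos_of_sum_eq_one hq hq_sum hr) <| Finset.sum_le_sum fun ω _ => hP ω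

end Jensen

section PathWeight

variable {S A : Type*} {T : ℕ}

/-- The mass of the path `ω` of a backward Markov chain which starts at time `T` with weights `μ`
and moves from time `j + 1` to time `j` by the kernel `R j`. Kernels take the current (later) state
first, and neither `μ` nor `R j` need be normalized. -/
def pathWeight [CommSemiring A] (μ : S → A) (R : Fin T → S → S → A) (ω : Fin (T + 1) → S) : A :=
  μ (ω (Fin.last T)) * ∏ j : Fin T, R j (ω j.succ) (ω j.castSucc)

theorem pathWeight_cons [CommSemiring A] (μ : S → A) (R : Fin (T + 1) → S → S → A) (z : S)
    (ω : Fin (T + 1) → S) :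
    pathWeight μ R (Fin.cons z ω : Fin (T + 2) → S)
      = R 0 (ω 0) z * pathWeight μ (fun j => R j.succ) ω := by
  simp only [pathWeight, Fin.prod_univ_succ, ← Fin.succ_last, ← Fin.succ_castSucc,
    Fin.castSucc_zero, Fin.cons_succ, Fin.cons_zero]
  ring

theorem pathWeight_mul_step [CommSemiring A] (μ : S → A) (R : Fin T → S → S → A) (j : Fin T)
    (f : S → S → A) (ω : Fin (T + 1) → S) :
    pathWeight μ R ω * f (ω j.succ) (ω j.castSucc)
      = pathWeight μ (fun i z z' => R i z z' * if i = j then f z z' else 1) ω := by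
  simp only [pathWeight, Finset.prod_mul_distrib, Fintype.prod_ite_eq', mul_assoc]

theorem sum_pathWeight [Fintype S] [CommSemiring A] (μ : S → A) {R : Fin T → S → S → A}
    {c : Fin T → A} (hR : ∀ j z, ∑ z', R j z z' = c j) :
    ∑ ω, pathWeight μ R ω = (∑ z, μ z) * ∏ j, c j := by
  induction T with
  | zero =>
    rw [← (Equiv.funUnique (Fin 1) S).symm.sum_comp]
    simp [pathWeight]
  | succ T ih =>
    rw [← (Fin.consEquiv fun _ : Fin (T + 2) => S).sum_comp, Fintype.sum_prod_type_right]
    change ∑ ω : Fin (T + 1) → S, ∑ z, pathWeight μ R (Fin.cons z ω : Fin (T + 2) → S) = _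
    simp only [pathWeight_cons, ← Finset.sum_mul, hR, ← Finset.mul_sum,
      ih (R := fun j => R j.succ) fun j z => hR j.succ z, Fin.prod_univ_succ]
    ring

theorem sum_pathWeight_mul_step [Fintype S] [CommRing A] (μ : S → A) {R : Fin T → S → S → A}
    (hR : ∀ j z, ∑ z', R j z z' = 1) (j : Fin T) (f : S → S → A) :
    ∑ ω, pathWeight μ R ω * f (ω j.succ) (ω j.castSucc)
      = ∑ ω, pathWeight μ R ω * ∑ z', R j (ω j.succ) z' * f (ω j.succ) z' := by
  set g : S → S → A := fun z z' => f z z' - ∑ z'', R j z z'' * f z z'' with hg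
  have row_sum (i : Fin T) (z : S) :
      ∑ z', R i z z' * (if i = j then g z z' else 1) = if i = j then 0 else 1 := by
    split_ifs with h
    · subst h
      simp [hg, mul_sub, ← Finset.sum_mul, hR]
    · simpa using hR i z
  rw [← sub_eq_zero, ← Finset.sum_sub_distrib]
  simp only [← mul_sub]
  -- Since `g` is centered, the `j`-th kernel reweighted by `g` has vanishing row sums.
  calc ∑ ω, pathWeight μ R ω * g (ω j.succ) (ω j.castSucc)
      = (∑ z, μ z) * ∏ i, if i = j then 0 else 1 := by
        simp only [pathWeight_mul_step]
        exact sum_pathWeight μ row_sum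
    _ = 0 := by simp

theorem pathWeight_nonneg {μ : S → ℝ} {R : Fin T → S → S → ℝ} (hμ : ∀ z, 0 ≤ μ z)
    (hR : ∀ j z z', 0 ≤ R j z z') (ω : Fin (T + 1) → S) : 0 ≤ pathWeight μ R ω :=
  mul_nonneg (hμ _) <| Finset.prod_nonneg fun _ _ => hR _ _ _

theorem pathWeight_mul_prod_le {μ : S → ℝ} {R G P : Fin T → S → S → ℝ} (hμ : ∀ z, 0 ≤ μ z)
    (hRG : ∀ j z z', 0 ≤ R j z z' * G j z z') (hP : ∀ j z z', R j z z' * G j z z' ≤ P j z z')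
    (ω : Fin (T + 1) → S) :
    pathWeight μ R ω * ∏ j : Fin T, G j (ω j.succ) (ω j.castSucc) ≤ pathWeight μ P ω := by
  rw [pathWeight, pathWeight, mul_assoc, ← Finset.prod_mul_distrib]
  exact mul_le_mul_of_nonneg_left
    (Finset.prod_le_prod (fun _ _ => hRG _ _ _) fun _ _ => hP _ _ _) (hμ _)

theorem neg_log_sum_pathWeight_le [Fintype S] {μ : S → ℝ} {R G P : Fin T → S → S → ℝ} {d : S → ℝ}
    (hμ : ∀ z, 0 ≤ μ z) (hμ_sum : ∑ z, μ z = 1)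
    (hR : ∀ j z z', 0 ≤ R j z z') (hR_sum : ∀ j z, ∑ z', R j z z' = 1)
    (hG : ∀ j z z', 0 < G j z z') (hP : ∀ j z z', R j z z' * G j z z' ≤ P j z z')
    (hd : ∀ z, 0 ≤ d z) (hd_pos : ∀ ω, 0 < pathWeight μ R ω → 0 < d (ω 0)) :
    -Real.log (∑ ω, pathWeight μ P ω * d (ω 0))
      ≤ ∑ ω, pathWeight μ R ω * -Real.log (d (ω 0))
        - ∑ j : Fin T, ∑ ω, pathWeight μ R ω *
            ∑ z', R j (ω j.succ) z' * Real.log (G j (ω j.succ) z') := by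
  have hq := pathWeight_nonneg hμ hR
  have hq_sum : ∑ ω, pathWeight μ R ω = 1 := by simp [sum_pathWeight μ hR_sum, hμ_sum]
  have hG_prod (ω : Fin (T + 1) → S) : 0 < ∏ j : Fin T, G j (ω j.succ) (ω j.castSucc) :=
    Finset.prod_pos fun _ _ => hG _ _ _
  have log_ratio (ω : Fin (T + 1) → S) :
      pathWeight μ R ω * Real.log ((∏ j : Fin T, G j (ω j.succ) (ω j.castSucc)) * d (ω 0))
        = ∑ j : Fin T, pathWeight μ R ω * Real.log (G j (ω j.succ) (ω j.castSucc))
          + pathWeight μ R ω * Real.log (d (ω 0)) := by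
    rcases (hq ω).eq_or_lt with h | h
    · simp [← h]
    · rw [Real.log_mul (hG_prod ω).ne' (hd_pos ω h).ne',
        Real.log_prod fun _ _ => (hG _ _ _).ne', mul_add, Finset.mul_sum]
  calc -Real.log (∑ ω, pathWeight μ P ω * d (ω 0))
      ≤ -∑ ω, pathWeight μ R ω *
          Real.log ((∏ j : Fin T, G j (ω j.succ) (ω j.castSucc)) * d (ω 0)) := by
        refine neg_log_sum_le_of_mul_le hq hq_sum
          (fun ω hω => mul_pos (hG_prod ω) (hd_pos ω hω)) fun ω => ?_
        rw [← mul_assoc]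
        exact mul_le_mul_of_nonneg_right
          (pathWeight_mul_prod_le hμ (fun _ _ _ => mul_nonneg (hR _ _ _) (hG _ _ _).le) hP ω)
          (hd _)
    _ = ∑ ω, pathWeight μ R ω * -Real.log (d (ω 0))
        - ∑ j : Fin T, ∑ ω, pathWeight μ R ω *
            Real.log (G j (ω j.succ) (ω j.castSucc)) := by
        simp only [log_ratio, Finset.sum_add_distrib, mul_neg, Finset.sum_neg_distrib]
        rw [Finset.sum_comm]
        ring
    _ = _ := by
        congr 1
        exact Finset.sum_congr rfl fun j _ =>
          sum_pathWeight_mul_step μ hR_sum j fun z z' => Real.log (G j z z')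

end PathWeight

section ProductWeights

variable {ι V A : Type*} [Fintype ι] [DecidableEq ι] [Fintype V] [CommSemiring A]

theorem sum_prod_mul_apply {F : ι → V → A} (hF : ∀ l, ∑ v, F l v = 1) (l : ι) (g : V → A) :
    ∑ z : ι → V, (∏ i, F i (z i)) * g (z l) = ∑ v, F l v * g v := by
  have absorb (z : ι → V) : (∏ i, F i (z i)) * g (z l)
      = ∏ i, F i (z i) * if i = l then g (z i) else 1 := by
    simp only [Finset.prod_mul_distrib, Fintype.prod_ite_eq']
  simp only [absorb]
  rw [← Fintype.prod_sum fun i v => F i v * if i = l then g v else 1]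
  refine (Fintype.prod_eq_single l fun i hi => ?_).trans ?_
  · simpa [hi] using hF i
  · simp

end ProductWeights

section Unmasking

variable {ι K : Type*} [DecidableEq K]

/-- The probability that one coordinate moves from `v` to `u` in a reverse step: a revealed token
stays, and the mask `Sum.inr ()` is revealed with probability `b` as a token drawn from `p`. -/
def unmaskProb (b : ℝ) (p : K → ℝ) (v u : K ⊕ Unit) : ℝ :=
  if v = Sum.inr () then Sum.elim (fun k => b * p k) (fun _ => 1 - b) u
  else if u = v then 1 else 0

/-- The reverse kernel of masked diffusion with token table `t`: given `zhi`, the coordinates move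
independently to `zlo`, a masked coordinate `l` being revealed with probability `b` as a token drawn
from `t zhi l`. The backward chain of the data `x` is the case `t _ l = Pi.single (x l) 1`. -/
def unmaskKernel [Fintype ι] (b : ℝ) (t : (ι → K ⊕ Unit) → ι → K → ℝ)
    (zhi zlo : ι → K ⊕ Unit) : ℝ :=
  ∏ l, unmaskProb b (t zhi l) (zhi l) (zlo l)

/-- The likelihood ratio of a one-coordinate transition `v → u` between an unmasking law that gives
probability `c` to the correct token and the law that never reveals another token. It is the
ratio only where the latter law has positive mass, and is kept equal to `c` when a wrong token is
revealed so that its logarithm is that of a positive number throughout. -/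
def revealRatio (c : ℝ) (v u : K ⊕ Unit) : ℝ :=
  if v = Sum.inr () ∧ u ≠ Sum.inr () then c else 1

/-- The sum of `f` over the masked coordinates of `z`. -/
def maskedSum [Fintype ι] (z : ι → K ⊕ Unit) (f : ι → ℝ) : ℝ :=
  ∑ l, f l * if z l = Sum.inr () then 1 else 0

theorem unmaskProb_nonneg {b : ℝ} (hb : b ∈ unitInterval) {p : K → ℝ} (hp : ∀ k, 0 ≤ p k)
    (v v' : K ⊕ Unit) : 0 ≤ unmaskProb b p v v' := by
  unfold unmaskProb
  split_ifs
  · rcases v' with k | _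
    · exact mul_nonneg hb.1 (hp k)
    · exact sub_nonneg.2 hb.2
  all_goals norm_num

theorem sum_unmaskProb [Fintype K] (b : ℝ) {p : K → ℝ} (hp : ∑ k, p k = 1) (v : K ⊕ Unit) :
    ∑ v', unmaskProb b p v v' = 1 := by
  by_cases h : v = Sum.inr () <;> simp [unmaskProb, h, ← Finset.mul_sum, hp]

theorem revealRatio_pos {c : ℝ} (hc : 0 < c) (v v' : K ⊕ Unit) : 0 < revealRatio c v v' := by
  unfold revealRatio
  split_ifs
  · exact hc
  · exact one_pos

theorem revealRatio_nonneg {c : ℝ} (hc : 0 ≤ c) (v v' : K ⊕ Unit) : 0 ≤ revealRatio c v v' := by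
  unfold revealRatio
  split_ifs
  · exact hc
  · exact zero_le_one

theorem sum_unmaskProb_mul_log_revealRatio [Fintype K] (b c : ℝ) {p : K → ℝ} (hp : ∑ k, p k = 1)
    (v : K ⊕ Unit) :
    ∑ v', unmaskProb b p v v' * Real.log (revealRatio c v v')
      = b * (Real.log c * if v = Sum.inr () then 1 else 0) := by
  by_cases h : v = Sum.inr () <;>
    simp [unmaskProb, revealRatio, h, ← Finset.sum_mul, ← Finset.mul_sum, hp]

theorem unmaskProb_single_mul_revealRatio_le {b : ℝ} (hb : 0 ≤ b) {p : K → ℝ} (hp : ∀ k, 0 ≤ p k)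
    (k : K) (v v' : K ⊕ Unit) :
    unmaskProb b (Pi.single k 1) v v' * revealRatio (p k) v v' ≤ unmaskProb b p v v' := by
  by_cases hv : v = Sum.inr ()
  · rcases v' with k' | _
    · obtain rfl | hk := eq_or_ne k' k
      · simp [unmaskProb, revealRatio, hv]
      · simpa [unmaskProb, revealRatio, hv, hk] using mul_nonneg hb (hp k')
    · simp [unmaskProb, revealRatio, hv]
  · simp [unmaskProb, revealRatio, hv]

variable [Fintype ι]

theorem unmaskKernel_single (b : ℝ) (x : ι → K) (z z' : ι → K ⊕ Unit) :
    unmaskKernel b (fun _ l => Pi.single (x l) 1) z z' = ∏ l, if z l = Sum.inr ()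
      then Sum.elim (fun k => if k = x l then b else 0) (fun _ => 1 - b) (z' l)
      else if z' l = z l then 1 else 0 := by
  simp only [unmaskKernel, unmaskProb, Pi.single_apply, mul_ite, mul_one, mul_zero]

theorem unmaskKernel_nonneg {b : ℝ} (hb : b ∈ unitInterval) {t : (ι → K ⊕ Unit) → ι → K → ℝ}
    (ht : ∀ z l k, 0 ≤ t z l k) (z z' : ι → K ⊕ Unit) : 0 ≤ unmaskKernel b t z z' :=
  Finset.prod_nonneg fun l _ => unmaskProb_nonneg hb (ht z l) _ _

theorem unmaskKernel_single_mul_prod_revealRatio_le {b : ℝ} (hb : b ∈ unitInterval)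
    {t : (ι → K ⊕ Unit) → ι → K → ℝ} (ht : ∀ z l k, 0 ≤ t z l k) (x : ι → K)
    (z z' : ι → K ⊕ Unit) :
    unmaskKernel b (fun _ l => Pi.single (x l) 1) z z'
        * ∏ l, revealRatio (t z l (x l)) (z l) (z' l)
      ≤ unmaskKernel b t z z' := by
  rw [unmaskKernel, unmaskKernel, ← Finset.prod_mul_distrib]
  have hx (l : ι) : 0 ≤ (Pi.single (x l) 1 : K → ℝ) := Pi.single_nonneg.2 zero_le_one
  exact Finset.prod_le_prod
    (fun l _ => mul_nonneg (unmaskProb_nonneg hb (hx l) _ _) (revealRatio_nonneg (ht z l _) _ _))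
    fun l _ => unmaskProb_single_mul_revealRatio_le hb.1 (ht z l) _ _ _

variable [DecidableEq ι] [Fintype K]

theorem sum_unmaskKernel (b : ℝ) {t : (ι → K ⊕ Unit) → ι → K → ℝ} (z : ι → K ⊕ Unit)
    (ht : ∀ l, ∑ k, t z l k = 1) : ∑ z', unmaskKernel b t z z' = 1 := by
  simp only [unmaskKernel, ← Fintype.prod_sum, sum_unmaskProb b (ht _), Finset.prod_const_one]

theorem sum_unmaskKernel_mul_log_prod_revealRatio (b : ℝ) {t : (ι → K ⊕ Unit) → ι → K → ℝ}
    (z : ι → K ⊕ Unit) (ht : ∀ l, ∑ k, t z l k = 1) {c : ι → ℝ} (hc : ∀ l, 0 < c l) :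
    ∑ z', unmaskKernel b t z z' * Real.log (∏ l, revealRatio (c l) (z l) (z' l))
      = b * maskedSum z fun l => Real.log (c l) := by
  simp only [Real.log_prod fun l _ => (revealRatio_pos (hc l) _ _).ne', Finset.mul_sum]
  rw [Finset.sum_comm, maskedSum, Finset.mul_sum]
  refine Finset.sum_congr rfl fun l _ => ?_
  rw [← sum_unmaskProb_mul_log_revealRatio b (c l) (ht l)]
  exact sum_prod_mul_apply (fun i => sum_unmaskProb b (ht i) (z i)) l
    fun v' => Real.log (revealRatio (c l) (z l) v')

end Unmasking

section MaskedDiffusion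

variable {ι K : Type*} [Fintype ι] [DecidableEq K] {T : ℕ}

/-- The law `q` of the backward chain that starts from `μ` and reveals masked coordinates as the
corresponding tokens of the data `x`, with reveal probabilities `β`. -/
noncomputable def revealPathLaw (μ : (ι → K ⊕ Unit) → ℝ) (β : Fin T → ℝ) (x : ι → K) :
    (Fin (T + 1) → ι → K ⊕ Unit) → ℝ :=
  pathWeight μ fun j => unmaskKernel (β j) fun _ l => Pi.single (x l) 1

/-- The tilted reverse mass `p_φ(x | y)`: each step of the reverse chain with tables `t j` is
weighted by the tilt `w j` at the state it leaves, and the final state by the decoder `d`. -/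
noncomputable def tiltedMass [DecidableEq ι] [Fintype K] (μ : (ι → K ⊕ Unit) → ℝ) (β : Fin T → ℝ)
    (t : Fin T → (ι → K ⊕ Unit) → ι → K → ℝ) (w : Fin T → (ι → K ⊕ Unit) → ℝ)
    (d : (ι → K ⊕ Unit) → ℝ) : ℝ :=
  ∑ ω, pathWeight μ (fun j z z' => unmaskKernel (β j) (t j) z z' * w j z) ω * d (ω 0)

/-- The negative evidence lower bound `L_NELBO` of masked diffusion with tables `t j` and decoder
`d` at the data `x`. -/
noncomputable def nelbo [DecidableEq ι] [Fintype K] (μ : (ι → K ⊕ Unit) → ℝ) (β : Fin T → ℝ)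
    (x : ι → K) (t : Fin T → (ι → K ⊕ Unit) → ι → K → ℝ) (d : (ι → K ⊕ Unit) → ℝ) : ℝ :=
  ∑ ω, revealPathLaw μ β x ω * -Real.log (d (ω 0))
    + ∑ j : Fin T, ∑ ω, revealPathLaw μ β x ω *
        (β j * maskedSum (ω j.succ) fun l => -Real.log (t j (ω j.succ) l (x l)))

variable [DecidableEq ι] [Fintype K]

theorem neg_log_tiltedMass_le {μ : (ι → K ⊕ Unit) → ℝ} (hμ : ∀ z, 0 ≤ μ z) (hμ_sum : ∑ z, μ z = 1)
    {β : Fin T → ℝ} (hβ : ∀ j, β j ∈ unitInterval) {x : ι → K}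
    {t : Fin T → (ι → K ⊕ Unit) → ι → K → ℝ} (ht : ∀ j z l k, 0 ≤ t j z l k)
    (ht_pos : ∀ j z l, 0 < t j z l (x l))
    {w : Fin T → (ι → K ⊕ Unit) → ℝ} (hw : ∀ j z, 0 < w j z)
    {d : (ι → K ⊕ Unit) → ℝ} (hd : ∀ z, 0 ≤ d z)
    (hd_pos : ∀ ω, 0 < revealPathLaw μ β x ω → 0 < d (ω 0)) :
    -Real.log (tiltedMass μ β t w d)
      ≤ nelbo μ β x t d
        - ∑ j : Fin T, ∑ ω, revealPathLaw μ β x ω * Real.log (w j (ω j.succ)) := by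
  set R : Fin T → (ι → K ⊕ Unit) → (ι → K ⊕ Unit) → ℝ :=
    fun j => unmaskKernel (β j) fun _ l => Pi.single (x l) 1 with hR
  have hR_nonneg (j : Fin T) : ∀ z z', 0 ≤ R j z z' :=
    unmaskKernel_nonneg (hβ j) fun _ l =>
      (Pi.single_nonneg.2 zero_le_one : 0 ≤ (Pi.single (x l) 1 : K → ℝ))
  set ρ : Fin T → (ι → K ⊕ Unit) → (ι → K ⊕ Unit) → ℝ :=
    fun j z z' => ∏ l, revealRatio (t j z l (x l)) (z l) (z' l) with hρ
  have hR_sum (j : Fin T) (z : ι → K ⊕ Unit) : ∑ z', R j z z' = 1 :=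
    sum_unmaskKernel (β j) z fun l => by simp
  have hρ_pos (j : Fin T) (z z' : ι → K ⊕ Unit) : 0 < ρ j z z' :=
    Finset.prod_pos fun l _ => revealRatio_pos (ht_pos j z l) _ _
  have expected_log_ratio (j : Fin T) (z : ι → K ⊕ Unit) :
      ∑ z', R j z z' * Real.log (ρ j z z' * w j z)
        = β j * maskedSum z (fun l => Real.log (t j z l (x l))) + Real.log (w j z) := by
    simp only [Real.log_mul (hρ_pos j z _).ne' (hw j z).ne', mul_add, Finset.sum_add_distrib,
      ← Finset.sum_mul, hR_sum, one_mul]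
    rw [hR, hρ, sum_unmaskKernel_mul_log_prod_revealRatio (β j) z (fun l => by simp) (ht_pos j z)]
  have bound := neg_log_sum_pathWeight_le (R := R) (G := fun j z z' => ρ j z z' * w j z)
    (P := fun j z z' => unmaskKernel (β j) (t j) z z' * w j z) hμ hμ_sum
    hR_nonneg hR_sum
    (fun j z z' => mul_pos (hρ_pos j z z') (hw j z))
    (fun j z z' => by
      rw [← mul_assoc]
      exact mul_le_mul_of_nonneg_right (unmaskKernel_single_mul_prod_revealRatio_le (hβ j) (ht j) x
        z z') (hw j z).le)
    hd hd_pos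
  refine bound.trans_eq ?_
  simp only [expected_log_ratio, nelbo, revealPathLaw, maskedSum, mul_add, Finset.sum_add_distrib,
    neg_mul, mul_neg, Finset.sum_neg_distrib]
  ring

theorem nelbo_add_sum_log_div (μ : (ι → K ⊕ Unit) → ℝ) (β : Fin T → ℝ) {x : ι → K}
    {s t : Fin T → (ι → K ⊕ Unit) → ι → K → ℝ} (hs : ∀ j z l, s j z l (x l) ≠ 0)
    (ht : ∀ j z l, t j z l (x l) ≠ 0) (d : (ι → K ⊕ Unit) → ℝ) :
    nelbo μ β x s d
        + ∑ j : Fin T, ∑ ω, revealPathLaw μ β x ω * (β j * maskedSum (ω j.succ)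
            fun l => Real.log (s j (ω j.succ) l (x l) / t j (ω j.succ) l (x l)))
      = nelbo μ β x t d := by
  simp only [nelbo, maskedSum, Real.log_div (hs _ _ _) (ht _ _ _), add_assoc,
    ← Finset.sum_add_distrib, ← mul_add, ← add_mul, neg_add_cancel_left, sub_eq_add_neg]

end MaskedDiffusion

theorem sub_div_one_sub_mem_unitInterval {s t : ℝ} (hts : t ≤ s) (hs : s ≤ 1) :
    (s - t) / (1 - t) ∈ unitInterval :=
  unitInterval.div_mem (sub_nonneg.2 hts) (sub_nonneg.2 (hts.trans hs)) (sub_le_sub_right hs t)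

theorem stmt_9_general {ι K : Type*} [Fintype ι] [DecidableEq ι] [Fintype K] [DecidableEq K]
    {T : ℕ} {μ : (ι → K ⊕ Unit) → ℝ} (hμ : ∀ z, 0 ≤ μ z) (hμ_sum : ∑ z, μ z = 1)
    {β : Fin T → ℝ} (hβ : ∀ j, β j ∈ unitInterval) {x : ι → K}
    {xθ xφ : Fin T → (ι → K ⊕ Unit) → ι → K → ℝ} (hxθ_pos : ∀ j z l, 0 < xθ j z l (x l))
    (hxφ : ∀ j z l k, 0 ≤ xφ j z l k) (hxφ_pos : ∀ j z l, 0 < xφ j z l (x l))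
    {w : Fin T → (ι → K ⊕ Unit) → ℝ} (hw : ∀ j z, 0 < w j z)
    {d : (ι → K ⊕ Unit) → ℝ} (hd : ∀ z, 0 ≤ d z)
    (hd_pos : ∀ ω, 0 < revealPathLaw μ β x ω → 0 < d (ω 0)) :
    -Real.log (tiltedMass μ β xφ w d)
      ≤ nelbo μ β x xθ d
        + (∑ j : Fin T, ∑ ω, revealPathLaw μ β x ω * (β j * maskedSum (ω j.succ)
            fun l => Real.log (xθ j (ω j.succ) l (x l) / xφ j (ω j.succ) l (x l))))
        - ∑ j : Fin T, ∑ ω, revealPathLaw μ β x ω * Real.log (w j (ω j.succ)) := by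
  rw [nelbo_add_sum_log_div μ β (fun j z l => (hxθ_pos j z l).ne') fun j z l => (hxφ_pos j z l).ne']
  exact neg_log_tiltedMass_le hμ hμ_sum hβ hxφ hxφ_pos hw hd hd_pos

/-- Theorem 2: Test-time Anchored Posterior Sampling, APS.
Same masked (absorbing) discrete diffusion setup as DDPS: `K` a finite token alphabet,
`V = K ⊕ Unit` with mask `m = Sum.inr ()`, sequences of `L` tokens, `T` reverse steps,
data `x : Fin L → K`, antitone noise schedule `a` with `a 0 ≤ 1`, `a T = 0`, `a i < 1`
for `i ≥ 1`, and `β j = (a j - a (j+1)) / (1 - a (j+1))`.  `qpath` is the law of the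
backward chain (all-mask at time `T`; coordinates revealed as `x l` with probability
`β` at masked positions, fixed otherwise).  `xθ` is the pretrained probability table,
`xφ` the adapted table, `w` the measurement-likelihood tilt weights (`0 < w z ≤ 1`),
`pdec` the shared decoder, `pφxy = p_φ(x | y)` the tilted reverse path mass of `x`, and
`LNELBO` the pretrained negative evidence lower bound.  Then
`-log p_φ(x|y) ≤ L_NELBO
  + ∑_i E_q[β_i ∑_l log (xθ(Z_i)^l(x^l) / xφ(Z_i)^l(x^l)) 1{Z_i^l = m}]
  - ∑_i E_q[log w(Z_i)]`. -/
theorem stmt_9 {K : Type*} [Fintype K] [DecidableEq K]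
    (L T : ℕ) (hL : 1 ≤ L) (hT : 1 ≤ T)
    (x : Fin L → K)
    (a : Fin (T + 1) → ℝ) (ha_anti : Antitone a)
    (ha0 : a 0 ≤ 1) (ha_last : a (Fin.last T) = 0)
    (ha_lt : ∀ i : Fin (T + 1), 1 ≤ (i : ℕ) → a i < 1)
    (β : Fin T → ℝ) (hβ : ∀ j, β j = (a j.castSucc - a j.succ) / (1 - a j.succ))
    (Qker : Fin T → (Fin L → K ⊕ Unit) → (Fin L → K ⊕ Unit) → ℝ)
    (hQker : ∀ j zhi zlo, Qker j zhi zlo = ∏ l, if zhi l = Sum.inr ()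
        then Sum.elim (fun k => if k = x l then β j else 0) (fun _ => 1 - β j) (zlo l)
        else if zlo l = zhi l then (1 : ℝ) else 0)
    (qpath : (Fin (T + 1) → Fin L → K ⊕ Unit) → ℝ)
    (hqpath : ∀ ω, qpath ω
      = (if ω (Fin.last T) = (fun _ => Sum.inr ()) then (1 : ℝ) else 0)
        * ∏ j : Fin T, Qker j (ω j.succ) (ω j.castSucc))
    (xθ xφ : (Fin L → K ⊕ Unit) → Fin L → K → ℝ)
    (hxθ_nonneg : ∀ z l k, 0 ≤ xθ z l k) (hxθ_sum : ∀ z l, ∑ k, xθ z l k = 1)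
    (hxθ_pos : ∀ z l, 0 < xθ z l (x l))
    (hxφ_nonneg : ∀ z l k, 0 ≤ xφ z l k) (hxφ_sum : ∀ z l, ∑ k, xφ z l k = 1)
    (hxφ_pos : ∀ z l, 0 < xφ z l (x l))
    (w : (Fin L → K ⊕ Unit) → ℝ) (hw_pos : ∀ z, 0 < w z) (hw_le : ∀ z, w z ≤ 1)
    (pdec : (Fin L → K ⊕ Unit) → ℝ) (hpdec_nonneg : ∀ z, 0 ≤ pdec z)
    (hpdec_pos : ∀ ω, 0 < qpath ω → 0 < pdec (ω 0))
    (Qφker : Fin T → (Fin L → K ⊕ Unit) → (Fin L → K ⊕ Unit) → ℝ)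
    (hQφker : ∀ j zhi zlo, Qφker j zhi zlo = ∏ l, if zhi l = Sum.inr ()
        then Sum.elim (fun k => β j * xφ zhi l k) (fun _ => 1 - β j) (zlo l)
        else if zlo l = zhi l then (1 : ℝ) else 0)
    (pφxy : ℝ)
    (hpφxy : pφxy = ∑ ω : Fin (T + 1) → Fin L → K ⊕ Unit,
      (if ω (Fin.last T) = (fun _ => Sum.inr ()) then (1 : ℝ) else 0)
        * (∏ j : Fin T, Qφker j (ω j.succ) (ω j.castSucc) * w (ω j.succ))
        * pdec (ω 0))
    (LNELBO : ℝ)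
    (hLNELBO : LNELBO
      = (∑ ω : Fin (T + 1) → Fin L → K ⊕ Unit, qpath ω * (-Real.log (pdec (ω 0))))
        + ∑ j : Fin T, ∑ ω : Fin (T + 1) → Fin L → K ⊕ Unit,
            qpath ω * (β j * ∑ l, (-Real.log (xθ (ω j.succ) l (x l)))
              * (if ω j.succ l = Sum.inr () then (1 : ℝ) else 0))) :
    -Real.log pφxy
      ≤ LNELBO
        + (∑ j : Fin T, ∑ ω : Fin (T + 1) → Fin L → K ⊕ Unit,
            qpath ω * (β j * ∑ l,
              Real.log (xθ (ω j.succ) l (x l) / xφ (ω j.succ) l (x l))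
                * (if ω j.succ l = Sum.inr () then (1 : ℝ) else 0)))
        - ∑ j : Fin T, ∑ ω : Fin (T + 1) → Fin L → K ⊕ Unit,
            qpath ω * Real.log (w (ω j.succ)) := by
  have hβ_mem (j : Fin T) : β j ∈ unitInterval := by
    rw [hβ]
    exact sub_div_one_sub_mem_unitInterval (ha_anti j.castSucc_lt_succ.le)
      ((ha_anti (Fin.zero_le _)).trans ha0)
  obtain rfl : Qker = fun j => unmaskKernel (β j) fun _ l => Pi.single (x l) 1 := by
    funext j z z'
    rw [hQker, unmaskKernel_single]
  obtain rfl : Qφker = fun j => unmaskKernel (β j) xφ := by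
    funext j z z'
    exact hQφker j z z'
  set μ : (Fin L → K ⊕ Unit) → ℝ := fun z => if z = (fun _ => Sum.inr ()) then 1 else 0 with hμ
  obtain rfl : qpath = revealPathLaw μ β x := funext hqpath
  have hμ_nonneg (z : Fin L → K ⊕ Unit) : 0 ≤ μ z := by
    rw [hμ]
    positivity
  have bound := stmt_9_general (xθ := fun _ => xθ) (xφ := fun _ => xφ) (w := fun _ => w) hμ_nonneg
    (by simp [hμ]) hβ_mem (fun _ => hxθ_pos) (fun _ => hxφ_nonneg) (fun _ => hxφ_pos)
    (fun _ => hw_pos) hpdec_nonneg hpdec_pos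
  rw [hpφxy, hLNELBO]
  exact bound
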